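/- arXiv:2507.09309 — 2 statements merged into one kernel-verified Lean document; each statement's English description precedes it below -/
import Mathlib

section
/- Suppose a hybrid zonotope has no equality constraints (n_c = 0) and its continuous generator matrix G^c ∈ ℝ^{n×n} is invertible, so that its leaves are Z_{c,i} = { G^c ξ + c + G^b ξ^b_i : ‖ξ‖_∞ ≤ 1 } and Z_{c,j} = { G^c ξ + c + G^b ξ^b_j : ‖ξ‖_∞ ≤ 1 }. Then the intersection Z_{c,i} ∩ Z_{c,j} has nonempty topological interior in ℝ^n if and only if there exist ξ^c, Δξ^c ∈ ℝ^n with G^c Δξ^c = G^b (ξ^b_j − ξ^b_i), |ξ^c_k| < 1 and |ξ^c_k − Δξ^c_k| < 1 for every coordinate k. Otherwise, if a pair (ξ^c, Δξ^c) satisfying these equations with the non-strict bounds ‖ξ^c‖_∞ ≤ 1 and ‖ξ^c − Δξ^c‖_∞ ≤ 1 exists but no strictly interior pair exists, the intersection is nonempty but has empty interior (tangent contact). -/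
open Matrix

/-- The leaf of a hybrid zonotope with no equality constraints (`n_c = 0`):
`{ Gᶜ ξ + c + Gᵇ ξb : ‖ξ‖_∞ ≤ 1 }`. -/
def HybridZonotope.leafNoCon {n nb : ℕ}
    (Gc : Matrix (Fin n) (Fin n) ℝ) (Gb : Matrix (Fin n) (Fin nb) ℝ)
    (c : Fin n → ℝ) (ξb : Fin nb → ℝ) : Set (Fin n → ℝ) :=
  {z | ∃ ξ : Fin n → ℝ, (∀ k, |ξ k| ≤ 1) ∧ z = Gc *ᵥ ξ + c + Gb *ᵥ ξb}

theorem mem_interior_leaf {n nb : ℕ}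
    (Gc : Matrix (Fin n) (Fin n) ℝ) (hdet : IsUnit Gc.det)
    {Gb : Matrix (Fin n) (Fin nb) ℝ} {c : Fin n → ℝ} {ξb : Fin nb → ℝ} {z : Fin n → ℝ} :
    z ∈ interior (HybridZonotope.leafNoCon Gc Gb c ξb) ↔
      ∃ ξ : Fin n → ℝ, (∀ k, |ξ k| < 1) ∧ z = Gc *ᵥ ξ + c + Gb *ᵥ ξb := by
  have hinv : ∀ ξ, Gc⁻¹ *ᵥ (Gc *ᵥ ξ) = ξ := fun ξ => by
    rw [Matrix.mulVec_mulVec, Matrix.nonsing_inv_mul _ hdet, Matrix.one_mulVec]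
  have hinv2 : ∀ ξ, Gc *ᵥ (Gc⁻¹ *ᵥ ξ) = ξ := fun ξ => by
    rw [Matrix.mulVec_mulVec, Matrix.mul_nonsing_inv _ hdet, Matrix.one_mulVec]
  constructor
  · intro hz
    obtain ⟨ξ, -, hξ⟩ := interior_subset hz
    refine ⟨ξ, ?_, hξ⟩
    let f : ℝ → Fin n → ℝ := fun t => Gc *ᵥ (ξ + fun _ => t) + c + Gb *ᵥ ξb
    have hf : Continuous f := by fun_prop
    have hf0 : f 0 = z := by
      rw [hξ]
      have : (ξ + fun _ => (0:ℝ)) = ξ := by ext; simp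
      simp only [f, this]
    have hn : f ⁻¹' interior (HybridZonotope.leafNoCon Gc Gb c ξb) ∈ nhds (0:ℝ) :=
      (isOpen_interior.preimage hf).mem_nhds (by rw [Set.mem_preimage, hf0]; exact hz)
    obtain ⟨ε, hε, hb⟩ := Metric.mem_nhds_iff.1 hn
    have hle : ∀ t : ℝ, |t| < ε → ∀ k, |ξ k + t| ≤ 1 := by
      intro t ht k
      have h1 : t ∈ Metric.ball (0:ℝ) ε := by simpa using ht
      obtain ⟨η, hη, he⟩ := interior_subset (hb h1)
      have h2 : Gc *ᵥ (ξ + fun _ => t) = Gc *ᵥ η := by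
        simpa [f] using he
      have h3 := congrArg (fun v => Gc⁻¹ *ᵥ v) h2
      simp only [hinv] at h3
      have := hη k
      rw [← h3] at this
      simpa using this
    intro k
    have h1 := abs_le.1 (hle (ε/2) (by rw [abs_of_pos (by linarith)]; linarith) k)
    have h2 := abs_le.1 (hle (-(ε/2)) (by rw [abs_neg, abs_of_pos (by linarith)]; linarith) k)
    rw [abs_lt]
    constructor <;> linarith [h1.2, h2.1]
  · rintro ⟨ξ, hξ, rfl⟩
    refine mem_interior.2 ⟨{z | ∀ k, |(Gc⁻¹ *ᵥ (z - c - Gb *ᵥ ξb)) k| < 1}, ?_, ?_, ?_⟩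
    · intro w hw
      refine ⟨_, fun k => (hw k).le, ?_⟩
      rw [hinv2]
      abel
    · simp only [Set.setOf_forall]
      refine isOpen_iInter_of_finite fun k => isOpen_lt ?_ continuous_const
      have h : Continuous fun w : Fin n → ℝ => Gc⁻¹ *ᵥ (w - c - Gb *ᵥ ξb) := by fun_prop
      exact ((continuous_apply k).comp h).abs
    · intro k
      have : Gc *ᵥ ξ + c + Gb *ᵥ ξb - c - Gb *ᵥ ξb = Gc *ᵥ ξ := by abel
      rw [this, hinv]
      exact hξ k

/-- Tangent contact vs. interior overlap for two leaves of a hybrid zonotope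
with no equality constraints and invertible continuous generator matrix:
the intersection has nonempty interior iff a strictly interior feasible pair
exists; and if a feasible pair exists but no strictly interior one does, the
intersection is nonempty with empty interior (tangent contact). -/
theorem inter_interior_iff_strict_feasible {n nb : ℕ}
    (Gc : Matrix (Fin n) (Fin n) ℝ) (hGc : IsUnit Gc)
    (Gb : Matrix (Fin n) (Fin nb) ℝ) (c : Fin n → ℝ)
    (ξbi ξbj : Fin nb → ℝ)
    (hbi : ∀ k, ξbi k = 1 ∨ ξbi k = -1) (hbj : ∀ k, ξbj k = 1 ∨ ξbj k = -1) :
    ((interior (HybridZonotope.leafNoCon Gc Gb c ξbi ∩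
        HybridZonotope.leafNoCon Gc Gb c ξbj)).Nonempty ↔
      (∃ ξc Δξc : Fin n → ℝ, Gc *ᵥ Δξc = Gb *ᵥ (ξbj - ξbi) ∧
        (∀ k, |ξc k| < 1) ∧ (∀ k, |ξc k - Δξc k| < 1))) ∧
    ((∃ ξc Δξc : Fin n → ℝ, Gc *ᵥ Δξc = Gb *ᵥ (ξbj - ξbi) ∧
        (∀ k, |ξc k| ≤ 1) ∧ (∀ k, |ξc k - Δξc k| ≤ 1)) →
      ¬ (∃ ξc Δξc : Fin n → ℝ, Gc *ᵥ Δξc = Gb *ᵥ (ξbj - ξbi) ∧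
        (∀ k, |ξc k| < 1) ∧ (∀ k, |ξc k - Δξc k| < 1)) →
      (HybridZonotope.leafNoCon Gc Gb c ξbi ∩
        HybridZonotope.leafNoCon Gc Gb c ξbj).Nonempty ∧
      interior (HybridZonotope.leafNoCon Gc Gb c ξbi ∩
        HybridZonotope.leafNoCon Gc Gb c ξbj) = ∅) := by
  have hdet : IsUnit Gc.det := (Matrix.isUnit_iff_isUnit_det Gc).1 hGc
  have key : ((interior (HybridZonotope.leafNoCon Gc Gb c ξbi ∩
        HybridZonotope.leafNoCon Gc Gb c ξbj)).Nonempty ↔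
      (∃ ξc Δξc : Fin n → ℝ, Gc *ᵥ Δξc = Gb *ᵥ (ξbj - ξbi) ∧
        (∀ k, |ξc k| < 1) ∧ (∀ k, |ξc k - Δξc k| < 1))) := by
    rw [interior_inter]
    constructor
    · rintro ⟨z, h1, h2⟩
      rw [mem_interior_leaf Gc hdet] at h1 h2
      obtain ⟨x, hx, rfl⟩ := h1
      obtain ⟨y, hy, hxy⟩ := h2
      refine ⟨x, x - y, ?_, hx, fun k => by simpa using hy k⟩
      rw [Matrix.mulVec_sub, Matrix.mulVec_sub]
      ext k
      have := congrFun hxy k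
      simp only [Pi.add_apply, Pi.sub_apply] at this ⊢
      linarith
    · rintro ⟨x, d, hd, hx, hy⟩
      refine ⟨Gc *ᵥ x + c + Gb *ᵥ ξbi, ?_, ?_⟩
      · rw [mem_interior_leaf Gc hdet]
        exact ⟨x, hx, rfl⟩
      · rw [mem_interior_leaf Gc hdet]
        refine ⟨x - d, hy, ?_⟩
        rw [Matrix.mulVec_sub, hd, Matrix.mulVec_sub]
        abel
  refine ⟨key, ?_⟩
  rintro ⟨x, d, hd, hx, hy⟩ hno
  refine ⟨⟨Gc *ᵥ x + c + Gb *ᵥ ξbi, ⟨x, hx, rfl⟩, ⟨x - d, hy, ?_⟩⟩, ?_⟩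
  · rw [Matrix.mulVec_sub, hd, Matrix.mulVec_sub]
    abel
  · rw [← Set.not_nonempty_iff_eq_empty, key]
    exact hno
end

section
/- Let Z_{c,i} and Z_{c,j} be leaves of a hybrid zonotope with Δξ^b = ξ^b_j − ξ^b_i, let M = [G^c; A^c], N = [G^b; A^b], and let P satisfy M P M = M, with L = (I − M P) N. Then Z_{c,i} ∩ Z_{c,j} ≠ ∅ if and only if L Δξ^b = 0 and there exist ξ^c, Δξ^c ∈ ℝ^{n_g} with M Δξ^c = N Δξ^b, A^c ξ^c = b − A^b ξ^b_i, ‖ξ^c‖_∞ ≤ 1 and ‖ξ^c − Δξ^c‖_∞ ≤ 1. -/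
open Matrix

/-- The leaf of a hybrid zonotope associated with a binary vector `ξb`. -/
def HybridZonotope.leaf {n ng nb nc : ℕ}
    (Gc : Matrix (Fin n) (Fin ng) ℝ) (Gb : Matrix (Fin n) (Fin nb) ℝ)
    (Ac : Matrix (Fin nc) (Fin ng) ℝ) (Ab : Matrix (Fin nc) (Fin nb) ℝ)
    (c : Fin n → ℝ) (b : Fin nc → ℝ) (ξb : Fin nb → ℝ) : Set (Fin n → ℝ) :=
  {z | ∃ ξ : Fin ng → ℝ, (∀ k, |ξ k| ≤ 1) ∧ Ac *ᵥ ξ = b - Ab *ᵥ ξb ∧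
    z = Gc *ᵥ ξ + c + Gb *ᵥ ξb}

/-- Adjacency characterization: with `M = [Gᶜ; Aᶜ]`, `N = [Gᵇ; Aᵇ]`,
`M P M = M` and `L = (I − M P) N`, two leaves intersect iff `L Δξᵇ = 0`
and the feasibility system has a solution. -/
theorem leaves_inter_nonempty_iff {n ng nb nc : ℕ}
    (Gc : Matrix (Fin n) (Fin ng) ℝ) (Gb : Matrix (Fin n) (Fin nb) ℝ)
    (Ac : Matrix (Fin nc) (Fin ng) ℝ) (Ab : Matrix (Fin nc) (Fin nb) ℝ)
    (c : Fin n → ℝ) (b : Fin nc → ℝ)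
    (ξbi ξbj : Fin nb → ℝ)
    (hbi : ∀ k, ξbi k = 1 ∨ ξbi k = -1) (hbj : ∀ k, ξbj k = 1 ∨ ξbj k = -1)
    (M : Matrix (Fin n ⊕ Fin nc) (Fin ng) ℝ) (hM : M = Matrix.fromRows Gc Ac)
    (N : Matrix (Fin n ⊕ Fin nc) (Fin nb) ℝ) (hN : N = Matrix.fromRows Gb Ab)
    (P : Matrix (Fin ng) (Fin n ⊕ Fin nc) ℝ) (hP : M * P * M = M)
    (L : Matrix (Fin n ⊕ Fin nc) (Fin nb) ℝ) (hL : L = (1 - M * P) * N) :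
    (HybridZonotope.leaf Gc Gb Ac Ab c b ξbi ∩
      HybridZonotope.leaf Gc Gb Ac Ab c b ξbj).Nonempty ↔
    (L *ᵥ (ξbj - ξbi) = 0 ∧
      ∃ ξc Δξc : Fin ng → ℝ,
        M *ᵥ Δξc = N *ᵥ (ξbj - ξbi) ∧
        Ac *ᵥ ξc = b - Ab *ᵥ ξbi ∧
        (∀ k, |ξc k| ≤ 1) ∧ (∀ k, |ξc k - Δξc k| ≤ 1)) := by
  have key : ∀ D : Fin ng → ℝ, M *ᵥ D = N *ᵥ (ξbj - ξbi) ↔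
      (Gc *ᵥ D = Gb *ᵥ (ξbj - ξbi) ∧ Ac *ᵥ D = Ab *ᵥ (ξbj - ξbi)) := by
    intro D
    rw [hM, hN, Matrix.fromRows_mulVec, Matrix.fromRows_mulVec, Sum.elim_eq_iff]
  constructor
  · rintro ⟨z, ⟨x, hx, hAx, hzx⟩, ⟨y, hy, hAy, hzy⟩⟩
    have hD : M *ᵥ (x - y) = N *ᵥ (ξbj - ξbi) := by
      rw [key]
      simp only [Matrix.mulVec_sub]
      constructor
      · ext k
        have h := congrFun (hzx.symm.trans hzy) k
        simp only [Pi.add_apply, Pi.sub_apply] at h ⊢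
        linarith
      · rw [hAx, hAy]; abel
    refine ⟨?_, x, x - y, hD, hAx, hx, ?_⟩
    · rw [hL, ← Matrix.mulVec_mulVec, ← hD, Matrix.mulVec_mulVec, Matrix.sub_mul, hP,
        Matrix.one_mul, sub_self, Matrix.zero_mulVec]
    · intro k
      simpa using hy k
  · rintro ⟨-, x, D, hD, hAx, hx, hy⟩
    obtain ⟨hG, hA⟩ := (key D).1 hD
    simp only [Matrix.mulVec_sub] at hG hA
    refine ⟨Gc *ᵥ x + c + Gb *ᵥ ξbi, ⟨x, hx, hAx, rfl⟩, ⟨x - D, hy, ?_, ?_⟩⟩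
    · rw [Matrix.mulVec_sub, hAx, hA]; abel
    · rw [Matrix.mulVec_sub, hG]; abel
end
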